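/- Let α ∈ (0,2]∖{1} and δ ∈ ℝ with |δ| ≤ min(α, 2−α). Then G_{α,δ} satisfies the Chapman–Kolmogorov (semigroup) equation: for all s, t > 0 and x ∈ ℝ, G_{α,δ}(t+s, x) = ∫_ℝ G_{α,δ}(t, y) G_{α,δ}(s, x−y) dy. -/

import Mathlib

open MeasureTheory

/-- The one-dimensional Green function
`G_{α,δ}(t,x) = (1/2π) ∫ exp(−izx − t|z|^α exp(−iδ(π/2) sgn z)) dz`. -/
noncomputable def G1 (a δ : ℝ) (t x : ℝ) : ℂ :=
  ((1 / (2 * Real.pi) : ℝ)) • ∫ z : ℝ,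
    Complex.exp (-(Complex.I * (z : ℂ) * (x : ℂ)) -
      ((t * |z| ^ a : ℝ) : ℂ) *
        Complex.exp (-(Complex.I * (δ : ℂ) * ((Real.pi / 2 : ℝ) : ℂ) *
          ((Real.sign z : ℝ) : ℂ))))

open scoped FourierTransform ComplexConjugate ContDiff

theorem continuous_fourier_aux {f : ℝ → ℂ} (hf : Integrable f) : Continuous (𝓕 f) :=
  VectorFourier.fourierIntegral_continuous Real.continuous_fourierChar
    (by exact continuous_inner (𝕜 := ℝ) (E := ℝ)) hf

theorem integral_fourier_mul_aux {f g : ℝ → ℂ} (hf : Integrable f) (hg : Integrable g) :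
    ∫ w, 𝓕 f w * g w = ∫ w, f w * 𝓕 g w := by
  simpa using! VectorFourier.integral_fourierIntegral_smul_eq_flip (L := innerₗ ℝ)
    Real.continuous_fourierChar (by exact continuous_inner (𝕜 := ℝ) (E := ℝ)) hf hg

theorem fourier_toLp_aux {f : ℝ → ℂ} (hf : Integrable f) (hf2 : MemLp f 2) :
    ((𝓕 (hf2.toLp f) : Lp (α := ℝ) ℂ 2) : ℝ → ℂ) =ᵐ[volume] 𝓕 f := by
  apply ae_eq_of_integral_contDiff_smul_eq
  · exact (Lp.memLp _).locallyIntegrable (by norm_num)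
  · exact (continuous_fourier_aux hf).locallyIntegrable
  · intro g g_smooth g_cpt
    have hg₁ : HasCompactSupport (Complex.ofRealCLM ∘ g) := g_cpt.comp_left rfl
    have hg₂ : ContDiff ℝ ∞ (Complex.ofRealCLM ∘ g) := by fun_prop
    have h1 := congrArg (fun T => T (hg₁.toSchwartzMap hg₂))
      (Lp.fourier_toTemperedDistribution_eq (hf2.toLp f))
    simp only [TemperedDistribution.fourier_apply, Lp.toTemperedDistribution_apply] at h1
    have h2 := integral_fourier_mul_aux hf (hg₁.toSchwartzMap hg₂).integrable
    have h3 : ∫ x, (𝓕 (hg₁.toSchwartzMap hg₂)) x • (hf2.toLp f) x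
        = ∫ x, f x * 𝓕 (⇑(hg₁.toSchwartzMap hg₂)) x := by
      apply integral_congr_ae
      filter_upwards [hf2.coeFn_toLp] with x hx
      rw [hx, SchwartzMap.fourier_coe, smul_eq_mul, mul_comm]
    rw [h3, ← h2] at h1
    simp only [HasCompactSupport.toSchwartzMap_toFun, Function.comp, smul_eq_mul,
      Complex.ofRealCLM_apply] at h1
    simp only [Complex.real_smul]
    rw [← h1]
    exact integral_congr_ae (Filter.Eventually.of_forall fun x => mul_comm _ _)

theorem plancherel_aux {f g : ℝ → ℂ} (hf : Integrable f) (hf2 : MemLp f 2)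
    (hg : Integrable g) (hg2 : MemLp g 2) :
    ∫ w, 𝓕 g w * conj (𝓕 f w) = ∫ z, g z * conj (f z) := by
  have h := Lp.inner_fourier_eq (hf2.toLp f) (hg2.toLp g)
  rw [L2.inner_def, L2.inner_def] at h
  simp only [RCLike.inner_apply] at h
  calc _ = _ := by
        apply integral_congr_ae
        filter_upwards [fourier_toLp_aux hf hf2, fourier_toLp_aux hg hg2] with x h1 h2
        rw [← h1, ← h2]
    _ = _ := h
    _ = _ := by
        apply integral_congr_ae
        filter_upwards [hf2.coeFn_toLp, hg2.coeFn_toLp] with x h1 h2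
        rw [h1, h2]

/-- The symbol. -/
noncomputable def symb (a δ t z : ℝ) : ℂ :=
  Complex.exp (-(((t * |z| ^ a : ℝ) : ℂ) *
        Complex.exp (-(Complex.I * (δ : ℂ) * ((Real.pi / 2 : ℝ) : ℂ) *
          ((Real.sign z : ℝ) : ℂ)))))

theorem symb_meas (a δ t : ℝ) : Measurable (symb a δ t) := by
  have h : Measurable Real.sign := by
    unfold Real.sign
    exact Measurable.ite measurableSet_Iio measurable_const
      (Measurable.ite measurableSet_Ioi measurable_const measurable_const)
  unfold symb
  fun_prop

theorem symb_norm (a δ t z : ℝ) (ha : 0 < a) :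
    ‖symb a δ t z‖ = Real.exp (-(t * Real.cos (δ * (Real.pi / 2))) * |z| ^ a) := by
  have h : ∀ r : ℝ, (Complex.exp (-(Complex.I * (δ : ℂ) * ((Real.pi / 2 : ℝ) : ℂ) *
          (r : ℂ)))).re = Real.cos (δ * (Real.pi / 2) * r) := by
    intro r
    rw [show -(Complex.I * (δ : ℂ) * ((Real.pi / 2 : ℝ) : ℂ) * (r : ℂ))
      = ((-(δ * (Real.pi / 2) * r) : ℝ) : ℂ) * Complex.I by push_cast; ring,
      Complex.exp_ofReal_mul_I_re, Real.cos_neg]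
  unfold symb
  rw [Complex.norm_exp, Complex.neg_re, Complex.re_ofReal_mul, h]
  congr 1
  rcases lt_trichotomy z 0 with hz | hz | hz
  · rw [Real.sign_of_neg hz, mul_neg_one, Real.cos_neg]; ring
  · simp [hz, Real.zero_rpow ha.ne']
  · rw [Real.sign_of_pos hz, mul_one]; ring

theorem exp_int (a b : ℝ) (ha : 0 < a) (hb : 0 < b) :
    Integrable (fun z : ℝ => Real.exp (-b * |z| ^ a)) := by
  have h := integrableOn_rpow_mul_exp_neg_mul_rpow (s := 0) (by norm_num) ha hb
  have h1 : IntegrableOn (fun z : ℝ => Real.exp (-b * |z| ^ a)) (Set.Ioi 0) := by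
    refine h.congr_fun (fun x hx => ?_) measurableSet_Ioi
    simp [abs_of_pos (Set.mem_Ioi.1 hx)]
  have h2 : IntegrableOn (fun z : ℝ => Real.exp (-b * |z| ^ a)) (Set.Iic 0) := by
    rw [← integrableOn_Ici_iff_integrableOn_Ioi] at h1
    have h3 := (Measure.measurePreserving_neg (volume : Measure ℝ)).integrableOn_comp_preimage
      (Homeomorph.neg ℝ).measurableEmbedding (f := fun z : ℝ => Real.exp (-b * |z| ^ a))
      (s := Set.Ici 0)
    have h4 := h3.2 h1
    simpa [Function.comp_def] using h4
  rw [← integrableOn_univ, ← Set.Iic_union_Ioi (a := (0:ℝ))]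
  exact h2.union h1

theorem symb_int (a δ t : ℝ) (ha : 0 < a) (ht : 0 < t)
    (hc : 0 < Real.cos (δ * (Real.pi / 2))) : Integrable (symb a δ t) := by
  rw [← integrable_norm_iff (symb_meas a δ t).aestronglyMeasurable]
  simp_rw [symb_norm a δ t _ ha]
  exact exp_int a _ ha (by positivity)

theorem symb_L2 (a δ t : ℝ) (ha : 0 < a) (ht : 0 < t)
    (hc : 0 < Real.cos (δ * (Real.pi / 2))) : MemLp (symb a δ t) 2 := by
  rw [memLp_two_iff_integrable_sq_norm (symb_meas a δ t).aestronglyMeasurable]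
  simp_rw [symb_norm a δ t _ ha, ← Real.exp_nat_mul]
  have h := exp_int a (2 * (t * Real.cos (δ * (Real.pi / 2)))) ha (by positivity)
  refine h.congr (Filter.Eventually.of_forall fun z => ?_)
  simp only []
  congr 1
  push_cast
  ring

theorem G1_eq (a δ t x : ℝ) :
    G1 a δ t x = ((1 / (2 * Real.pi) : ℝ)) • 𝓕 (symb a δ t) (x / (2 * Real.pi)) := by
  unfold G1
  rw [Real.fourier_real_eq_integral_exp_smul]
  congr 2
  ext z
  rw [symb, smul_eq_mul, ← Complex.exp_add, sub_eq_add_neg]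
  congr 2
  have : (Real.pi : ℂ) ≠ 0 := by exact_mod_cast Real.pi_ne_zero
  push_cast
  field_simp

theorem conj_fourier_aux (f : ℝ → ℂ) (ξ w : ℝ) :
    conj (𝓕 (fun z : ℝ => Complex.exp (((2 * Real.pi * z * ξ : ℝ) : ℂ) * Complex.I) * conj (f z)) w)
      = 𝓕 f (ξ - w) := by
  rw [Real.fourier_real_eq_integral_exp_smul, Real.fourier_real_eq_integral_exp_smul,
    ← integral_conj]
  congr 1
  ext z
  simp only [smul_eq_mul, map_mul, ← Complex.exp_conj, Complex.conj_ofReal, Complex.conj_I,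
    Complex.conj_conj]
  rw [← mul_assoc, ← Complex.exp_add]
  congr 2
  push_cast
  ring

theorem stmt6 (a δ : ℝ) (ha : 0 < a ∧ a ≤ 2 ∧ a ≠ 1)
    (hδ : |δ| ≤ min a (2 - a)) (s t : ℝ) (hs : 0 < s) (ht : 0 < t) (x : ℝ) :
    G1 a δ (t + s) x = ∫ y : ℝ, G1 a δ t y * G1 a δ s (x - y) := by
  obtain ⟨ha0, ha2, ha1⟩ := ha
  have hd : |δ| < 1 := by
    have h1 := hδ.trans (min_le_left _ _)
    have h2 := hδ.trans (min_le_right _ _)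
    rcases lt_or_gt_of_ne ha1 with h | h <;> linarith
  have hc : 0 < Real.cos (δ * (Real.pi / 2)) := by
    have := abs_lt.1 hd
    have hp := Real.pi_pos
    apply Real.cos_pos_of_mem_Ioo
    constructor <;> nlinarith
  set ξ : ℝ := x / (2 * Real.pi) with hξ
  set u : ℝ → ℂ := fun z : ℝ =>
    Complex.exp (((2 * Real.pi * z * ξ : ℝ) : ℂ) * Complex.I) * conj (symb a δ s z) with hu
  have humeas : AEStronglyMeasurable u volume := by
    have := symb_meas a δ s
    have h2 : Measurable u := by
      rw [hu]
      exact Measurable.mul (by fun_prop) (Complex.continuous_conj.measurable.comp this)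
    exact h2.aestronglyMeasurable
  have hun : ∀ z, ‖u z‖ = ‖symb a δ s z‖ := by
    intro z
    rw [hu]
    simp only [norm_mul, Complex.norm_exp_ofReal_mul_I, one_mul, RCLike.norm_conj]
  have huint : Integrable u :=
    (symb_int a δ s ha0 hs hc).congr' humeas
      (Filter.Eventually.of_forall fun z => (hun z).symm)
  have hu2 : MemLp u 2 :=
    (symb_L2 a δ s ha0 hs hc).congr_norm humeas
      (Filter.Eventually.of_forall fun z => (hun z).symm)
  have hP := plancherel_aux huint hu2 (symb_int a δ t ha0 ht hc) (symb_L2 a δ t ha0 ht hc)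
  have hR : ∫ z, symb a δ t z * conj (u z) = 𝓕 (symb a δ (t + s)) ξ := by
    rw [Real.fourier_real_eq_integral_exp_smul]
    congr 1
    ext z
    simp only [hu, smul_eq_mul, map_mul, ← Complex.exp_conj, Complex.conj_ofReal, Complex.conj_I,
      Complex.conj_conj]
    unfold symb
    rw [← Complex.exp_add, ← Complex.exp_add, ← Complex.exp_add]
    congr 1
    push_cast
    ring
  rw [hR] at hP
  simp only [hu, conj_fourier_aux] at hP
  rw [G1_eq, ← hξ, ← hP]
  simp_rw [G1_eq, sub_div, ← hξ]
  have hsub := Measure.integral_comp_div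
    (fun w : ℝ => 𝓕 (symb a δ t) w * 𝓕 (symb a δ s) (ξ - w)) (2 * Real.pi)
  have hp := Real.pi_pos
  simp only [smul_mul_smul_comm]
  rw [integral_smul, hsub, smul_smul, abs_of_pos (by positivity)]
  congr 1
  field_simp
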